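/- Let ω > 0 and h > 0 with ω·h < 2π, and set c₀ = −1/ω² + (h/(2ω))·cot(ω·h/2) and c₋₁ = −c₀. Define for real λ the amplification factor r(λ) = (1 + (h/2)·λ + c₋₁·λ²)/(1 − (h/2)·λ − c₀·λ²). Then 0 < r(λ) < 1 for every real λ < 0, and r(λ) tends to 1 as λ tends to −∞; that is, Integrator A induces no numerical oscillation but damps fast decaying transients only slowly. -/

import Mathlib

lemma aux_g (y : ℝ) (h0 : 0 < y) (h1 : y < Real.pi) :
    0 < Real.sin y - y * Real.cos y := by
  have hd : ∀ x : ℝ, HasDerivAt (fun x : ℝ => Real.sin x - x * Real.cos x)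
      (x * Real.sin x) x := by
    intro x
    have := (Real.hasDerivAt_sin x).sub ((hasDerivAt_id x).mul (Real.hasDerivAt_cos x))
    refine HasDerivAt.congr_deriv this ?_
    simp
  have hm : StrictMonoOn (fun x : ℝ => Real.sin x - x * Real.cos x) (Set.Icc 0 Real.pi) := by
    apply strictMonoOn_of_deriv_pos (convex_Icc _ _)
    · fun_prop
    · intro x hx
      rw [interior_Icc] at hx
      rw [(hd x).deriv]
      exact mul_pos hx.1 (Real.sin_pos_of_pos_of_lt_pi hx.1 hx.2)
  have := hm ⟨le_refl 0, Real.pi_pos.le⟩ ⟨h0.le, h1.le⟩ h0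
  simpa using this

lemma aux_f (y : ℝ) (h0 : 0 < y) (h1 : y < Real.pi) :
    0 < Real.sin y - y * Real.cos y - y ^ 2 / 4 * Real.sin y := by
  have hd : ∀ x : ℝ, HasDerivAt
      (fun x : ℝ => Real.sin x - x * Real.cos x - x ^ 2 / 4 * Real.sin x)
      (x / 4 * (Real.sin x + (Real.sin x - x * Real.cos x))) x := by
    intro x
    have := ((Real.hasDerivAt_sin x).sub ((hasDerivAt_id x).mul (Real.hasDerivAt_cos x))).sub
      ((((hasDerivAt_id x).pow 2).div_const 4).mul (Real.hasDerivAt_sin x))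
    refine HasDerivAt.congr_deriv this ?_
    simp
    ring
  have hm : StrictMonoOn (fun x : ℝ => Real.sin x - x * Real.cos x - x ^ 2 / 4 * Real.sin x)
      (Set.Icc 0 Real.pi) := by
    apply strictMonoOn_of_deriv_pos (convex_Icc _ _)
    · fun_prop
    · intro x hx
      rw [interior_Icc] at hx
      rw [(hd x).deriv]
      exact mul_pos (by linarith [hx.1])
        (add_pos (Real.sin_pos_of_pos_of_lt_pi hx.1 hx.2) (aux_g x hx.1 hx.2))
  have := hm ⟨le_refl 0, Real.pi_pos.le⟩ ⟨h0.le, h1.le⟩ h0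
  simpa using this

open Filter in
theorem integratorA_transient_performance
    (ω h : ℝ) (hω : 0 < ω) (hh : 0 < h) (hωh : ω * h < 2 * Real.pi)
    (c₀ cm1 : ℝ)
    (hc₀ : c₀ = -1 / ω ^ 2 + (h / (2 * ω)) * Real.cot (ω * h / 2))
    (hcm1 : cm1 = -c₀)
    (r : ℝ → ℝ)
    (hr : r = fun l => (1 + (h / 2) * l + cm1 * l ^ 2)
      / (1 - (h / 2) * l - c₀ * l ^ 2)) :
    (∀ l : ℝ, l < 0 → 0 < r l ∧ r l < 1) ∧ Tendsto r atBot (nhds 1) := by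
  have y0 : 0 < ω * h / 2 := by positivity
  have y1 : ω * h / 2 < Real.pi := by linarith
  have hs := Real.sin_pos_of_pos_of_lt_pi y0 y1
  have hf := aux_f _ y0 y1
  have key : h ^ 2 / 16 < cm1 := by
    have e : cm1 - h ^ 2 / 16 = (Real.sin (ω * h / 2) - ω * h / 2 * Real.cos (ω * h / 2)
        - (ω * h / 2) ^ 2 / 4 * Real.sin (ω * h / 2)) / (ω ^ 2 * Real.sin (ω * h / 2)) := by
      rw [hcm1, hc₀, Real.cot_eq_cos_div_sin]
      have := hs.ne'
      generalize Real.sin (ω * h / 2) = s at *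
      generalize Real.cos (ω * h / 2) = c at *
      field_simp
      ring
    have : 0 < cm1 - h ^ 2 / 16 := by rw [e]; positivity
    linarith
  have hc : c₀ = -cm1 := by linarith
  have hcpos : 0 < cm1 := lt_trans (by positivity) key
  subst hr
  rw [hc]
  constructor
  · intro l hl
    have l2 : 0 < l ^ 2 := by nlinarith
    have hn : 0 < 1 + (h / 2) * l + cm1 * l ^ 2 := by
      nlinarith [sq_nonneg (1 + h / 4 * l), mul_pos (sub_pos.2 key) l2]
    have hl' : h / 2 * l < 0 := mul_neg_of_pos_of_neg (by positivity) hl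
    have hd : 0 < 1 - (h / 2) * l - -cm1 * l ^ 2 := by nlinarith
    exact ⟨div_pos hn hd, by rw [div_lt_one hd]; nlinarith⟩
  · have ht : Tendsto (fun u : ℝ => (u ^ 2 + h / 2 * u + cm1) / (u ^ 2 - h / 2 * u + cm1))
        (nhds 0) (nhds 1) := by
      have hca : ContinuousAt
          (fun u : ℝ => (u ^ 2 + h / 2 * u + cm1) / (u ^ 2 - h / 2 * u + cm1)) 0 := by
        apply ContinuousAt.div
        · fun_prop
        · fun_prop
        · simpa using hcpos.ne'
      have := hca.tendsto
      simpa [hcpos.ne'] using this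
    refine (ht.comp tendsto_inv_atBot_zero).congr' ?_
    filter_upwards [eventually_lt_atBot (0 : ℝ)] with l hl
    have l0 : l ≠ 0 := hl.ne
    have e1 : (l⁻¹) ^ 2 + h / 2 * l⁻¹ + cm1 = (1 + (h / 2) * l + cm1 * l ^ 2) / l ^ 2 := by
      field_simp
    have e2 : (l⁻¹) ^ 2 - h / 2 * l⁻¹ + cm1 = (1 - (h / 2) * l - -cm1 * l ^ 2) / l ^ 2 := by
      field_simp
      ring
    simp only [Function.comp]
    rw [e1, e2, div_div_div_cancel_right₀ (pow_ne_zero 2 l0)]
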